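/- For α > -1, the kernel K^{(α)}(z,w) = (2 Re z)^{α/2} (2 Re w)^{α/2} ∫₀¹ (t^{α+1}/Γ(α+1)) e^{-t(z+w̄)} dt on the right half-plane satisfies the mass-one equation: ∫_{H₊} |K^{(α)}(z,w)|² dA(w) = K^{(α)}(z,z) for all z with Re z > 0, where dA is Lebesgue measure divided by π. -/

import Mathlib

open MeasureTheory Complex

/-- The hard-wall kernel `K^{(α)}(z,w) = (2 Re z)^{α/2} (2 Re w)^{α/2}
    ∫₀¹ (t^{α+1}/Γ(α+1)) e^{-t(z+conj w)} dt`. -/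
noncomputable def hardWallKernel (α : ℝ) (z w : ℂ) : ℂ :=
  (((2 * z.re) ^ (α / 2) * (2 * w.re) ^ (α / 2) : ℝ) : ℂ) *
    ∫ t in Set.Ioc (0 : ℝ) 1,
      ((t ^ (α + 1) / Real.Gamma (α + 1) : ℝ) : ℂ) *
        Complex.exp (-(t : ℂ) * (z + (starRingEnd ℂ) w))

/-! Up to the factor `(2 Re z)^{α/2} (2 Re w)^{α/2}`, the function `w ↦ K^{(α)}(w, z)` is the
Laplace transform of the density `f t = t^{α+1}/Γ(α+1) e^{-t conj z}` on `(0, 1]`. On a vertical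
line the Laplace transform is the Fourier transform of a damped function; Plancherel on each line,
followed by integrating out the real part with `∫₀^∞ (2u)^α e^{-2tu} du = Γ(α+1)/(2 t^{α+1})`, gives
the weighted Paley–Wiener isometry
`∫_{H₊} (2 Re w)^α |Lf(w)|² dA(w) = Γ(α+1) ∫₀^∞ |f t|² t^{-(α+1)} dt`.
For this `f` the right-hand side times `(2 Re z)^α` is `K^{(α)}(z, z)`. -/

open Set FourierTransform SchwartzMap

section Plancherel

variable {V F : Type*} [NormedAddCommGroup V] [InnerProductSpace ℝ V] [FiniteDimensional ℝ V]
  [MeasurableSpace V] [BorelSpace V] [NormedAddCommGroup F] [InnerProductSpace ℂ F]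
  [CompleteSpace F] {f : V → F}

theorem coeFn_fourier_toLp (hf₁ : Integrable f) (hf₂ : MemLp f 2) :
    (𝓕 (hf₂.toLp f) : Lp F 2 (volume : Measure V)) =ᵐ[volume] 𝓕 f := by
  have fourier_continuous : Continuous (𝓕 f) :=
    VectorFourier.fourierIntegral_continuous (μ := volume) (L := innerₗ V)
      Real.continuous_fourierChar continuous_inner hf₁
  refine ae_eq_of_integral_contDiff_smul_eq ((Lp.memLp _).locallyIntegrable one_le_two)
    fourier_continuous.locallyIntegrable fun φ φ_smooth φ_supp ↦ ?_
  have ψ_supp : HasCompactSupport (ofRealCLM ∘ φ) := φ_supp.comp_left rfl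
  let ψ : 𝓢(V, ℂ) := ψ_supp.toSchwartzMap (ofRealCLM.contDiff.comp φ_smooth)
  calc ∫ x, φ x • (𝓕 (hf₂.toLp f) : Lp F 2 (volume : Measure V)) x
      = ∫ x, ψ x • (𝓕 (hf₂.toLp f) : Lp F 2 (volume : Measure V)) x := by simp [ψ]
    _ = ∫ x, (𝓕 ψ) x • hf₂.toLp f x := by
        simpa only [TemperedDistribution.fourier_apply, Lp.toTemperedDistribution_apply] using
          (congrArg (· ψ) (Lp.fourier_toTemperedDistribution_eq (hf₂.toLp f))).symm
    _ = ∫ x, (𝓕 ψ) x • f x :=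
        integral_congr_ae (hf₂.coeFn_toLp.mono fun x hx ↦ congrArg ((𝓕 ψ) x • ·) hx)
    _ = ∫ x, ψ x • 𝓕 f x := by
        simpa only [flip_innerₗ] using!
          VectorFourier.integral_fourierIntegral_smul_eq_flip (μ := volume) (ν := volume)
            (L := innerₗ V) Real.continuous_fourierChar continuous_inner ψ.integrable hf₁
    _ = ∫ x, φ x • 𝓕 f x := by simp [ψ]

theorem eLpNorm_fourier (hf₁ : Integrable f) (hf₂ : MemLp f 2) :
    eLpNorm (𝓕 f) 2 = eLpNorm f 2 := by
  rw [← eLpNorm_congr_ae (coeFn_fourier_toLp hf₁ hf₂), ← eLpNorm_congr_ae hf₂.coeFn_toLp,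
    ← Lp.enorm_def, ← Lp.enorm_def, ← ofReal_norm, ← ofReal_norm, Lp.norm_fourier_eq]

theorem lintegral_enorm_fourier_sq (hf₁ : Integrable f) (hf₂ : MemLp f 2) :
    ∫⁻ ξ, ‖𝓕 f ξ‖ₑ ^ 2 = ∫⁻ x, ‖f x‖ₑ ^ 2 := by
  have eLpNorm_sq (g : V → F) : eLpNorm g 2 ^ 2 = ∫⁻ x, ‖g x‖ₑ ^ 2 := by
    simpa using eLpNorm_nnreal_pow_eq_lintegral (f := g) (μ := volume) two_ne_zero
  rw [← eLpNorm_sq, ← eLpNorm_sq, eLpNorm_fourier hf₁ hf₂]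

end Plancherel

theorem lintegral_comp_mul_left {a : ℝ} (ha : a ≠ 0) (f : ℝ → ENNReal) :
    ∫⁻ x, f (a * x) = ENNReal.ofReal |a⁻¹| * ∫⁻ x, f x := by
  rw [← smul_eq_mul, ← lintegral_smul_measure, ← Real.map_volume_mul_left ha,
    (measurableEmbedding_mulLeft₀ ha).lintegral_map]

theorem setLIntegral_reProdIm {s t : Set ℝ} {f : ℂ → ENNReal}
    (hf : AEMeasurable f (volume.restrict (s ×ℂ t))) :
    ∫⁻ w in s ×ℂ t, f w = ∫⁻ x in s, ∫⁻ y in t, f ⟨x, y⟩ := by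
  have equiv := volume_preserving_equiv_real_prod.symm
  have emb := measurableEquivRealProd.symm.measurableEmbedding
  rw [← equiv.setLIntegral_comp_preimage_emb emb]
  refine setLIntegral_prod _ ?_
  exact (equiv.restrict_preimage_emb emb _).aemeasurable_comp_iff emb |>.2 hf

theorem integral_mul_norm_sq_eq_toReal_lintegral {X F : Type*} [MeasurableSpace X]
    [NormedAddCommGroup F] {μ : Measure X} {g : X → ℝ} {f : X → F} (hg : 0 ≤ᵐ[μ] g)
    (hg_meas : AEStronglyMeasurable g μ) (hf : AEStronglyMeasurable f μ) :
    ∫ x, g x * ‖f x‖ ^ 2 ∂μ = (∫⁻ x, ENNReal.ofReal (g x) * ‖f x‖ₑ ^ 2 ∂μ).toReal := by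
  rw [integral_eq_lintegral_of_nonneg_ae (hg.mono fun x hx ↦ mul_nonneg hx (sq_nonneg _))
    (hg_meas.mul (hf.norm.pow 2))]
  congr 1
  refine lintegral_congr_ae (hg.mono fun x hx ↦ ?_)
  simp only [ENNReal.ofReal_mul hx, ENNReal.ofReal_pow (norm_nonneg _), ofReal_norm]

theorem lintegral_two_mul_rpow_mul_exp_neg_Ioi {α t : ℝ} (hα : -1 < α) (ht : 0 < t) :
    ∫⁻ u in Ioi 0, ENNReal.ofReal ((2 * u) ^ α * Real.exp (-(2 * t * u))) =
      ENNReal.ofReal (Real.Gamma (α + 1) / (2 * t ^ (α + 1))) := by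
  have Gamma_pos : 0 < Real.Gamma (α + 1) := Real.Gamma_pos_of_pos (by linarith)
  have integral_eq : ∫ u in Ioi 0, (2 * u) ^ α * Real.exp (-(2 * t * u)) =
      Real.Gamma (α + 1) / (2 * t ^ (α + 1)) := by
    calc ∫ u in Ioi 0, (2 * u) ^ α * Real.exp (-(2 * t * u))
        = ∫ u in Ioi 0, (2 * u) ^ (α + 1 - 1) * Real.exp (-(t * (2 * u))) := by
          simp only [add_sub_cancel_right, mul_left_comm t, mul_assoc]
      _ = 2⁻¹ * ((1 / t) ^ (α + 1) * Real.Gamma (α + 1)) := by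
          rw [integral_comp_mul_left_Ioi (fun s ↦ s ^ (α + 1 - 1) * Real.exp (-(t * s))) 0 two_pos,
            mul_zero, Real.integral_rpow_mul_exp_neg_mul_Ioi (by linarith) ht, smul_eq_mul]
      _ = Real.Gamma (α + 1) / (2 * t ^ (α + 1)) := by
          rw [one_div, Real.inv_rpow ht.le]
          ring
  rw [← integral_eq, ofReal_integral_eq_lintegral_ofReal]
  · exact .of_integral_ne_zero (by rw [integral_eq]; positivity)
  · filter_upwards [ae_restrict_mem measurableSet_Ioi] with u (hu : 0 < u)
    positivity

theorem norm_exp_neg_mul_sq (t : ℝ) (z : ℂ) :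
    ‖exp (-(t * z))‖ ^ 2 = Real.exp (-(2 * t * z.re)) := by
  rw [norm_exp, ← Real.exp_nat_mul, neg_re, re_ofReal_mul, Nat.cast_ofNat, mul_neg, mul_assoc]

theorem memLp_two_exp_neg_mul_Ioi {u : ℝ} (hu : 0 < u) :
    MemLp (fun t : ℝ ↦ exp (-(t * u))) 2 (volume.restrict (Ioi 0)) := by
  rw [memLp_two_iff_integrable_sq_norm (by fun_prop)]
  refine (integrableOn_exp_mul_Ioi (a := -(2 * u)) (by linarith) 0).congr
    (.of_forall fun t ↦ ?_)
  simp only [norm_exp_neg_mul_sq, ofReal_re, neg_mul, mul_right_comm]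

section Damped

variable {F : Type*} [NormedAddCommGroup F] [NormedSpace ℂ F] {f : ℝ → F}
  (hf : ∀ u : ℝ, 0 < u →
    MemLp (fun t : ℝ ↦ exp (-(t * u)) • f t) 2 (volume.restrict (Ioi 0)))

include hf

theorem integrableOn_exp_smul_of_memLp_two {u : ℝ} (hu : 0 < u) :
    IntegrableOn (fun t : ℝ ↦ exp (-(t * u)) • f t) (Ioi 0) := by
  -- Hölder, after splitting `e^{-tu} = e^{-tu/2} e^{-tu/2}`.
  have product := (hf (u / 2) (half_pos hu)).smul (r := 1)
    (memLp_two_exp_neg_mul_Ioi (half_pos hu))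
  refine (memLp_one_iff_integrable.1 product).congr (.of_forall fun t ↦ ?_)
  simp only [Pi.smul_apply', smul_smul, ← exp_add]
  congr 2
  push_cast
  ring

theorem aestronglyMeasurable_of_memLp_two_exp_smul :
    AEStronglyMeasurable f (volume.restrict (Ioi 0)) := by
  have exp_meas : AEStronglyMeasurable (fun t : ℝ ↦ exp t) (volume.restrict (Ioi 0)) := by fun_prop
  refine (exp_meas.smul (hf 1 one_pos).1).congr (.of_forall fun t ↦ ?_)
  simp [smul_smul, ← exp_add]

end Damped

/-- The Laplace transform `w ↦ ∫₀^∞ e^{-tw} f(t) dt` of a vector-valued function; only the values of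
`f` on the positive half-line enter. -/
noncomputable def laplaceTransform {F : Type*} [NormedAddCommGroup F] [NormedSpace ℂ F]
    (f : ℝ → F) (w : ℂ) : F :=
  ∫ t in Ioi (0 : ℝ), exp (-(t * w)) • f t

namespace laplaceTransform

section NormedSpace

variable {F : Type*} [NormedAddCommGroup F] [NormedSpace ℂ F] {f : ℝ → F}

theorem aestronglyMeasurable (hf : AEStronglyMeasurable f (volume.restrict (Ioi 0))) :
    AEStronglyMeasurable (laplaceTransform f) := by
  refine AEStronglyMeasurable.integral_prod_right'
    (f := fun p : ℂ × ℝ ↦ exp (-(p.2 * p.1)) • f p.2) ?_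
  exact Continuous.aestronglyMeasurable (by fun_prop) |>.smul hf.comp_snd

theorem eq_fourier (f : ℝ → F) (u v : ℝ) :
    laplaceTransform f ⟨u, v⟩ =
      𝓕 ((Ioi 0).indicator fun t : ℝ ↦ exp (-(t * u)) • f t) ((2 * Real.pi)⁻¹ * v) := by
  rw [Real.fourier_eq', laplaceTransform, ← integral_indicator measurableSet_Ioi]
  refine integral_congr_ae (.of_forall fun t ↦ ?_)
  by_cases ht : t ∈ Ioi (0 : ℝ)
  · simp only [indicator_of_mem ht, smul_smul, ← exp_add]
    congr 2
    rw [mk_eq_add_mul_I, RCLike.inner_apply, conj_trivial]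
    push_cast
    field_simp
    ring
  · simp only [indicator_of_notMem ht, smul_zero]

end NormedSpace

variable {F : Type*} [NormedAddCommGroup F] [InnerProductSpace ℂ F] [CompleteSpace F] {f : ℝ → F}

theorem lintegral_enorm_sq_vertical {u : ℝ}
    (hf₁ : IntegrableOn (fun t : ℝ ↦ exp (-(t * u)) • f t) (Ioi 0))
    (hf₂ : MemLp (fun t : ℝ ↦ exp (-(t * u)) • f t) 2 (volume.restrict (Ioi 0))) :
    ∫⁻ v, ‖laplaceTransform f ⟨u, v⟩‖ₑ ^ 2 =
      ENNReal.ofReal (2 * Real.pi) *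
        ∫⁻ t in Ioi 0, ENNReal.ofReal (Real.exp (-(2 * t * u))) * ‖f t‖ₑ ^ 2 := by
  simp_rw [eq_fourier]
  rw [lintegral_comp_mul_left (by positivity) (fun ξ ↦ ‖𝓕 (_ : ℝ → F) ξ‖ₑ ^ 2),
    lintegral_enorm_fourier_sq (hf₁.integrable_indicator measurableSet_Ioi)
      ((memLp_indicator_iff_restrict measurableSet_Ioi).2 hf₂), inv_inv,
    abs_of_pos Real.two_pi_pos, ← lintegral_indicator measurableSet_Ioi]
  congr 2 with t
  by_cases ht : t ∈ Ioi (0 : ℝ)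
  · simp only [indicator_of_mem ht, enorm_smul, mul_pow]
    rw [← ofReal_norm (exp _), ← ENNReal.ofReal_pow (norm_nonneg _), norm_exp_neg_mul_sq,
      ofReal_re]
  · simp [indicator_of_notMem ht]

variable (hf : ∀ u : ℝ, 0 < u →
  MemLp (fun t : ℝ ↦ exp (-(t * u)) • f t) 2 (volume.restrict (Ioi 0)))

include hf in
theorem lintegral_rpow_mul_enorm_sq {α : ℝ} (hα : -1 < α) :
    ∫⁻ w in {w : ℂ | 0 < w.re},
        ENNReal.ofReal ((2 * w.re) ^ α) * ‖laplaceTransform f w‖ₑ ^ 2 =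
      ENNReal.ofReal Real.pi *
        ∫⁻ t in Ioi 0, ENNReal.ofReal (Real.Gamma (α + 1) / t ^ (α + 1)) * ‖f t‖ₑ ^ 2 := by
  have f_meas := aestronglyMeasurable_of_memLp_two_exp_smul hf
  have halfPlane : {w : ℂ | 0 < w.re} = Ioi 0 ×ℂ univ := by ext; simp [mem_reProdIm]
  calc
    _ = ∫⁻ u in Ioi (0 : ℝ), ∫⁻ v : ℝ,
          ENNReal.ofReal ((2 * u) ^ α) * ‖laplaceTransform f ⟨u, v⟩‖ₑ ^ 2 := by
        have weight_meas : Measurable fun w : ℂ ↦ ENNReal.ofReal ((2 * w.re) ^ α) := by fun_prop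
        rw [halfPlane, setLIntegral_reProdIm]
        · simp only [Measure.restrict_univ]
        · exact weight_meas.aemeasurable.mul
            ((aestronglyMeasurable f_meas).restrict.enorm.pow_const 2)
    _ = ∫⁻ u in Ioi (0 : ℝ), ∫⁻ t in Ioi (0 : ℝ), ENNReal.ofReal (2 * Real.pi) *
          ‖f t‖ₑ ^ 2 * ENNReal.ofReal ((2 * u) ^ α * Real.exp (-(2 * t * u))) := by
        refine setLIntegral_congr_fun measurableSet_Ioi fun u (hu : 0 < u) ↦ ?_
        rw [lintegral_const_mul' _ _ ENNReal.ofReal_ne_top,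
          lintegral_enorm_sq_vertical (integrableOn_exp_smul_of_memLp_two hf hu) (hf u hu),
          mul_left_comm, ← lintegral_const_mul' _ _ ENNReal.ofReal_ne_top,
          ← lintegral_const_mul' _ _ ENNReal.ofReal_ne_top]
        refine lintegral_congr fun t ↦ ?_
        rw [ENNReal.ofReal_mul (by positivity : 0 ≤ (2 * u) ^ α)]
        ring
    _ = ∫⁻ t in Ioi (0 : ℝ), ∫⁻ u in Ioi (0 : ℝ), ENNReal.ofReal (2 * Real.pi) *
          ‖f t‖ₑ ^ 2 * ENNReal.ofReal ((2 * u) ^ α * Real.exp (-(2 * t * u))) :=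
        lintegral_lintegral_swap <|
          ((f_meas.enorm.pow_const 2).comp_snd.const_mul _).mul (by fun_prop)
    _ = _ := by
        rw [← lintegral_const_mul' _ _ ENNReal.ofReal_ne_top]
        refine setLIntegral_congr_fun measurableSet_Ioi fun t (ht : 0 < t) ↦ ?_
        rw [lintegral_const_mul' _ _ (by finiteness), lintegral_two_mul_rpow_mul_exp_neg_Ioi hα ht,
          mul_right_comm, ← ENNReal.ofReal_mul (by positivity), ← mul_assoc,
          ← ENNReal.ofReal_mul Real.pi_nonneg]
        congr 2
        field_simp

include hf in
theorem integral_rpow_mul_norm_sq {α : ℝ} (hα : -1 < α) :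
    ∫ w in {w : ℂ | 0 < w.re}, (2 * w.re) ^ α * ‖laplaceTransform f w‖ ^ 2 =
      Real.pi * ∫ t in Ioi 0, Real.Gamma (α + 1) / t ^ (α + 1) * ‖f t‖ ^ 2 := by
  have f_meas := aestronglyMeasurable_of_memLp_two_exp_smul hf
  have Gamma_pos : 0 < Real.Gamma (α + 1) := Real.Gamma_pos_of_pos (by linarith)
  have halfPlane_meas : MeasurableSet {w : ℂ | 0 < w.re} :=
    measurableSet_lt measurable_const measurable_re
  rw [integral_mul_norm_sq_eq_toReal_lintegral _ _ (aestronglyMeasurable f_meas).restrict,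
    integral_mul_norm_sq_eq_toReal_lintegral _ _ f_meas, lintegral_rpow_mul_enorm_sq hf hα,
    ENNReal.toReal_mul, ENNReal.toReal_ofReal Real.pi_nonneg]
  · filter_upwards [ae_restrict_mem measurableSet_Ioi] with t (ht : 0 < t)
    positivity
  · exact (by fun_prop : Measurable _).aestronglyMeasurable
  · filter_upwards [ae_restrict_mem halfPlane_meas] with w (hw : 0 < w.re)
    positivity
  · exact (by fun_prop : Measurable _).aestronglyMeasurable

end laplaceTransform

theorem memLp_indicator_Ioc_of_continuousOn {E : Type*} [NormedAddCommGroup E] {g : ℝ → E}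
    {a b : ℝ} (hg : ContinuousOn g (Icc a b)) (p : ENNReal) :
    MemLp ((Ioc a b).indicator g) p := by
  obtain ⟨C, hC⟩ := isCompact_Icc.exists_bound_of_continuousOn hg
  refine (memLp_indicator_iff_restrict measurableSet_Ioc).2 (.of_bound ?_ C ?_)
  · exact (hg.mono Ioc_subset_Icc_self).aestronglyMeasurable measurableSet_Ioc
  · filter_upwards [ae_restrict_mem measurableSet_Ioc] with t ht
    exact hC t (Ioc_subset_Icc_self ht)

namespace hardWallKernel

/-- The density whose Laplace transform is, up to the factor `(2 Re z)^{α/2} (2 Re w)^{α/2}`, the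
kernel `w ↦ K^{(α)}(w, z)`. -/
noncomputable def density (α : ℝ) (z : ℂ) : ℝ → ℂ :=
  (Ioc 0 1).indicator fun t ↦
    (t ^ (α + 1) / Real.Gamma (α + 1) : ℝ) * exp (-t * starRingEnd ℂ z)

theorem conj_symm (α : ℝ) (z w : ℂ) :
    starRingEnd ℂ (hardWallKernel α z w) = hardWallKernel α w z := by
  simp only [hardWallKernel, map_mul, conj_ofReal, ← integral_conj, ← exp_conj, map_neg, map_add,
    conj_conj]
  rw [mul_comm ((2 * z.re) ^ (α / 2))]
  simp only [add_comm]

theorem exp_smul_density (α : ℝ) (z w : ℂ) :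
    (fun t : ℝ ↦ exp (-(t * w)) • density α z t) = (Ioc 0 1).indicator fun t : ℝ ↦
      (t ^ (α + 1) / Real.Gamma (α + 1) : ℝ) * exp (-t * (w + starRingEnd ℂ z)) := by
  funext t
  rw [density, ← indicator_smul_apply (Ioc 0 1) fun t : ℝ ↦ exp (-(t * w))]
  congr 1 with s
  rw [smul_eq_mul, mul_left_comm, ← exp_add]
  ring_nf

theorem eq_laplaceTransform (α : ℝ) (z w : ℂ) :
    hardWallKernel α w z =
      ((2 * z.re) ^ (α / 2) * (2 * w.re) ^ (α / 2) : ℝ) * laplaceTransform (density α z) w := by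
  rw [hardWallKernel, laplaceTransform, exp_smul_density, setIntegral_indicator measurableSet_Ioc,
    inter_eq_self_of_subset_right Ioc_subset_Ioi_self, mul_comm ((2 * w.re) ^ (α / 2))]

theorem norm_sq_eq {α : ℝ} {z w : ℂ} (hz : 0 < z.re) (hw : 0 < w.re) :
    ‖hardWallKernel α z w‖ ^ 2 =
      (2 * z.re) ^ α * ((2 * w.re) ^ α * ‖laplaceTransform (density α z) w‖ ^ 2) := by
  have rpow_half_sq {x : ℝ} (hx : 0 < x) : (x ^ (α / 2)) ^ 2 = x ^ α := by
    rw [← Real.rpow_mul_natCast hx.le]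
    norm_num
  rw [← RCLike.norm_conj, conj_symm, eq_laplaceTransform, norm_mul, mul_pow, norm_real,
    Real.norm_eq_abs, sq_abs, mul_pow, rpow_half_sq (by positivity), rpow_half_sq (by positivity),
    mul_assoc]

theorem memLp_exp_smul_density {α : ℝ} (hα : -1 < α) (z : ℂ) (u : ℝ) (p : ENNReal) :
    MemLp (fun t : ℝ ↦ exp (-(t * u)) • density α z t) p := by
  have rpow_cont : Continuous fun t : ℝ ↦ t ^ (α + 1) := Real.continuous_rpow_const (by linarith)
  rw [exp_smul_density]
  exact memLp_indicator_Ioc_of_continuousOn (by fun_prop) p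

theorem Gamma_div_rpow_mul_norm_density_sq {α t : ℝ} (hα : -1 < α) (ht : 0 < t) (z : ℂ) :
    Real.Gamma (α + 1) / t ^ (α + 1) * ‖density α z t‖ ^ 2 =
      (Ioc 0 1).indicator
        (fun s ↦ s ^ (α + 1) / Real.Gamma (α + 1) * Real.exp (-(2 * s * z.re))) t := by
  have Gamma_pos : 0 < Real.Gamma (α + 1) := Real.Gamma_pos_of_pos (by linarith)
  by_cases ht₁ : t ∈ Ioc (0 : ℝ) 1
  · simp only [density, indicator_of_mem ht₁, norm_mul, mul_pow, neg_mul, norm_exp_neg_mul_sq,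
      conj_re, norm_real, Real.norm_eq_abs, sq_abs]
    field_simp
  · simp [density, indicator_of_notMem ht₁]

theorem self_eq {α : ℝ} {z : ℂ} (hz : 0 < z.re) :
    hardWallKernel α z z = ((2 * z.re) ^ α *
      ∫ t in Ioc 0 1, t ^ (α + 1) / Real.Gamma (α + 1) * Real.exp (-(2 * t * z.re)) : ℝ) := by
  rw [hardWallKernel, ← Real.rpow_add (by positivity), add_halves, ofReal_mul,
    ← integral_complex_ofReal]
  congr 2 with t
  rw [add_conj]
  push_cast
  ring_nf

theorem self_eq_integral_density {α : ℝ} (hα : -1 < α) {z : ℂ} (hz : 0 < z.re) :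
    hardWallKernel α z z = ((2 * z.re) ^ α *
      ∫ t in Ioi 0, Real.Gamma (α + 1) / t ^ (α + 1) * ‖density α z t‖ ^ 2 : ℝ) := by
  rw [self_eq hz, setIntegral_congr_fun measurableSet_Ioi fun t ht ↦
    Gamma_div_rpow_mul_norm_density_sq hα ht z, setIntegral_indicator measurableSet_Ioc,
    inter_eq_self_of_subset_right Ioc_subset_Ioi_self]

end hardWallKernel

/-- Mass-one equation for the hard-wall kernel: for every `z` in the right half plane,
    `∫_{H₊} |K^{(α)}(z,w)|² dA(w) = K^{(α)}(z,z)` where `dA` is Lebesgue measure divided by π. -/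
theorem hardWallKernel_mass_one (α : ℝ) (hα : -1 < α) (z : ℂ) (hz : 0 < z.re) :
    (((1 / Real.pi) * ∫ w in {w : ℂ | 0 < w.re}, ‖hardWallKernel α z w‖ ^ 2 : ℝ) : ℂ)
      = hardWallKernel α z z := by
  have halfPlane_meas : MeasurableSet {w : ℂ | 0 < w.re} :=
    measurableSet_lt measurable_const measurable_re
  rw [hardWallKernel.self_eq_integral_density hα hz,
    setIntegral_congr_fun halfPlane_meas fun w hw ↦ hardWallKernel.norm_sq_eq hz hw,
    integral_const_mul, laplaceTransform.integral_rpow_mul_norm_sq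
      (fun u _ ↦ (hardWallKernel.memLp_exp_smul_density hα z u 2).restrict _) hα, mul_left_comm]
  field_simp
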